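/- Let d ≥ 3 and let A₁ ⊆ A₂ ⊊ T with A₁ nonempty. Define g(x) = P_x[H_{A₁} ≤ T_{A₂}] and f_{A₁}(x) = 1 − E_x[H_{A₁}]/E[H_{A₁}] for x ∈ T. Then D(g,g)·(1 − 2 sup_{x ∈ T∖A₂} |f_{A₁}(x)|) ≤ 1/E[H_{A₁}] ≤ D(g,g)/π(T∖A₂)², where π is the uniform probability measure on T and E denotes expectation for the walk started from π. -/

import Mathlib

open MeasureTheory Filter Classical
open scoped ENNReal NNReal

noncomputable section

namespace Frag

/-! ### Graph-theoretic basics -/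

/-- Two vertices of `Fin d → R` are adjacent if they differ in exactly one
coordinate, by `±1` (Euclidean distance one). -/
def adj {d : ℕ} {R : Type*} [AddGroupWithOne R] (x y : Fin d → R) : Prop :=
  x ≠ y ∧ ∃ i : Fin d, (y i = x i + 1 ∨ x i = y i + 1) ∧ ∀ j : Fin d, j ≠ i → x j = y j

/-- The discrete torus `(ℤ/Nℤ)^d`. -/
abbrev Torus (d N : ℕ) := Fin d → ZMod N

/-- The lattice `ℤ^d`. -/
abbrev Lat (d : ℕ) := Fin d → ℤ

instance (n : ℕ) : MeasurableSpace (ZMod n) := ⊤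

/-- The `ℓ∞`-distance on the torus. -/
def torusDist {d N : ℕ} (x y : Torus d N) : ℕ :=
  Finset.univ.sup fun i : Fin d => min (x i - y i).val (y i - x i).val

/-- The `ℓ∞`-distance on the lattice. -/
def latDist {d : ℕ} (x y : Lat d) : ℕ :=
  Finset.univ.sup fun i : Fin d => (x i - y i).natAbs

/-- Closed `ℓ∞`-ball in the torus. -/
def torusBall {d N : ℕ} (x : Torus d N) (r : ℝ) : Set (Torus d N) :=
  {y | (torusDist x y : ℝ) ≤ r}

/-- Closed `ℓ∞`-ball in the lattice. -/
def latBall {d : ℕ} (x : Lat d) (r : ℝ) : Set (Lat d) :=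
  {y | (latDist x y : ℝ) ≤ r}

/-- `x` and `y` are connected by a nearest-neighbour path staying in `S`. -/
def connectedIn {α : Type*} (rel : α → α → Prop) (S : Set α) (x y : α) : Prop :=
  ∃ (n : ℕ) (p : ℕ → α), p 0 = x ∧ p n = y ∧ (∀ k, k ≤ n → p k ∈ S) ∧
    ∀ k, k < n → rel (p k) (p (k + 1))

/-- The connected component of `x` inside `S`. -/
def compOf {α : Type*} (rel : α → α → Prop) (S : Set α) (x : α) : Set α :=
  {y | connectedIn rel S x y}

/-- `S` is a connected set. -/
def IsConnSet {α : Type*} (rel : α → α → Prop) (S : Set α) : Prop :=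
  ∀ x ∈ S, ∀ y ∈ S, connectedIn rel S x y

/-- External vertex boundary. -/
def extBdry {α : Type*} (rel : α → α → Prop) (S : Set α) : Set α :=
  {y | y ∉ S ∧ ∃ x ∈ S, rel x y}

/-- Internal vertex boundary. -/
def intBdry {α : Type*} (rel : α → α → Prop) (S : Set α) : Set α :=
  {x | x ∈ S ∧ ∃ y, y ∉ S ∧ rel x y}

/-- The cardinality of the largest connected component of `S`. -/
def maxCompSize {α : Type*} (rel : α → α → Prop) (S : Set α) : ℕ :=
  sSup {n | ∃ x ∈ S, n = (compOf rel S x).ncard}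

/-- The diameter of a set with respect to a distance. -/
def diamOf {α : Type*} (dist : α → α → ℕ) (S : Set α) : ℕ :=
  sSup {n | ∃ x ∈ S, ∃ y ∈ S, n = dist x y}

/-- The canonical graph isomorphism `φ` from `B(0, N/4) ⊆ (ℤ/Nℤ)^d` onto
`B(0, N/4) ⊆ ℤ^d`, given by the signed representative of each coordinate. -/
def torusToLat {d N : ℕ} (x : Torus d N) : Lat d :=
  fun i => if ((x i).val : ℝ) ≤ (N : ℝ) / 2 then ((x i).val : ℤ) else ((x i).val : ℤ) - (N : ℤ)

/-! ### Discrete-time simple random walk -/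

/-- One-step transition probability of the simple random walk. -/
def srwStep {d : ℕ} {R : Type*} [AddGroupWithOne R] (x y : Fin d → R) : ℝ≥0∞ :=
  if adj x y then ((2 * d : ℕ) : ℝ≥0∞)⁻¹ else 0

/-- `μ` is the law on path space of the discrete-time simple random walk with
initial distribution `init`, characterized by its cylinder probabilities. -/
def IsWalkLaw {d : ℕ} {R : Type*} [AddGroupWithOne R] [MeasurableSpace R]
    (μ : Measure (ℕ → (Fin d → R))) (init : (Fin d → R) → ℝ≥0∞) : Prop :=
  IsProbabilityMeasure μ ∧
  ∀ (n : ℕ) (w : ℕ → (Fin d → R)),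
    μ {ω | ∀ k, k ≤ n → ω k = w k} =
      init (w 0) * ∏ k ∈ Finset.range n, srwStep (w k) (w (k + 1))

/-- The uniform initial distribution on the torus. -/
def unifInit (d N : ℕ) : Torus d N → ℝ≥0∞ := fun _ => ((N : ℝ≥0∞) ^ d)⁻¹

/-- The initial distribution concentrated at `x`. -/
def pointInit {α : Type*} (x : α) : α → ℝ≥0∞ := fun y => if y = x then 1 else 0

/-- The set of sites visited in the first `t` steps. -/
def visited {α : Type*} (t : ℕ) (ω : ℕ → α) : Set α := {v | ∃ k, k ≤ t ∧ ω k = v}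

/-! ### Capacity and random interlacements on `ℤ^d` -/

/-- The event that the walk never returns to `V` after time `0`. -/
def escEvent {d : ℕ} (V : Set (Lat d)) : Set (ℕ → Lat d) :=
  {w | ∀ n, 1 ≤ n → w n ∉ V}

/-- `r` is the (simple random walk) capacity of `V ⊆ ℤ^d`:
`r = Σ_{x ∈ V} P_x[H̃_V = ∞]`. -/
def IsCap (d : ℕ) (V : Set (Lat d)) (r : ℝ) : Prop :=
  ∃ μ : Lat d → Measure (ℕ → Lat d),
    (∀ x, IsWalkLaw (μ x) (pointInit x)) ∧
    r = ∑ᶠ x ∈ V, ((μ x) (escEvent V)).toReal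

/-- `I` is a random interlacement at level `u` on the probability space `(Ω, P)`:
for every finite `V ⊆ ℤ^d`, `P[I ∩ V = ∅] = exp (−u · cap V)`. -/
def IsInterlacement (d : ℕ) (u : ℝ) {Ω : Type*} [MeasurableSpace Ω]
    (P : Measure Ω) (I : Ω → Set (Lat d)) : Prop :=
  IsProbabilityMeasure P ∧
  (∀ x : Lat d, MeasurableSet {ω | x ∈ I ω}) ∧
  ∀ V : Set (Lat d), V.Finite → ∀ r : ℝ, IsCap d V r →
    P {ω | ∀ x ∈ V, x ∉ I ω} = ENNReal.ofReal (Real.exp (-u * r))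

/-- `e = η(u)`, the probability that the origin lies in an infinite component of
the vacant set `V^u = ℤ^d ∖ I^u` of a random interlacement at level `u`. -/
def IsEta (d : ℕ) (u e : ℝ) : Prop :=
  ∃ (Ω : Type) (_ : MeasurableSpace Ω) (P : Measure Ω) (I : Ω → Set (Lat d)),
    IsInterlacement d u P I ∧
    e = (P {ω | (compOf adj ((I ω)ᶜ) (0 : Lat d)).Infinite}).toReal

/-- The critical level `u_* = inf {u ≥ 0 : η(u) = 0}`. -/
def uStar (d : ℕ) : ℝ := sInf {u | 0 ≤ u ∧ IsEta d u 0}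

/-- The probability of an event `E` about a random interlacement at level `u`. -/
def intProb (d : ℕ) (u : ℝ) (E : Set (Lat d) → Prop) : ℝ :=
  sSup {p | ∃ (Ω : Type) (_ : MeasurableSpace Ω) (P : Measure Ω) (I : Ω → Set (Lat d)),
    IsInterlacement d u P I ∧ p = (P {ω | E (I ω)}).toReal}

/-- The event that `B(0,L)` is connected to the external boundary of `B(0,2L)`
by a nearest-neighbour path in `S`. -/
def connAcross (d L : ℕ) (S : Set (Lat d)) : Prop :=
  ∃ x ∈ latBall (0 : Lat d) (L : ℝ), ∃ y ∈ extBdry adj (latBall (0 : Lat d) (2 * (L : ℝ))),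
    connectedIn adj S x y

/-- The critical level `u_** = inf {u ≥ 0 : α(u) > 0}`. -/
def uStarStar (d : ℕ) : ℝ :=
  sInf {u | 0 ≤ u ∧ ∃ a : ℝ, 0 < a ∧
    Tendsto (fun L : ℕ => (L : ℝ) ^ a * intProb d u fun I => connAcross d L Iᶜ)
      atTop (nhds 0)}

/-- `u` is a strongly supercritical level for random interlacements on `ℤ^d`. -/
def StronglySupercritical (d : ℕ) (u : ℝ) : Prop :=
  ∃ μ : ℝ, 0 < μ ∧
  ∃ (Ω : Type) (_ : MeasurableSpace Ω) (P : Measure Ω) (I : ℝ → Ω → Set (Lat d)),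
    (∀ v : ℝ, 0 ≤ v → IsInterlacement d v P (I v)) ∧
    (∀ v v' : ℝ, v ≤ v' → ∀ ω, I v ω ⊆ I v' ω) ∧
    ∃ N₀ : ℕ, ∀ N : ℕ, N₀ ≤ N →
      (1 - Real.exp (-(N : ℝ) ^ μ) ≤
        (P {ω | ∃ x ∈ latBall (0 : Lat d) (N : ℝ),
          (compOf adj ((I (u * (1 + μ)) ω)ᶜ) x).Infinite}).toReal) ∧
      (1 - Real.exp (-(N : ℝ) ^ μ) ≤
        (P {ω | ∀ S₁ S₂ : Set (Lat d),
            S₁ ⊆ (I (u * (1 - μ)) ω)ᶜ ∩ latBall 0 (N : ℝ) →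
            S₂ ⊆ (I (u * (1 - μ)) ω)ᶜ ∩ latBall 0 (N : ℝ) →
            IsConnSet adj S₁ → IsConnSet adj S₂ →
            (N : ℝ) / 8 ≤ (diamOf latDist S₁ : ℝ) →
            (N : ℝ) / 8 ≤ (diamOf latDist S₂ : ℝ) →
            ∃ x ∈ S₁, ∃ y ∈ S₂,
              connectedIn adj ((I (u * (1 + μ)) ω)ᶜ ∩ latBall 0 (2 * (N : ℝ))) x y}).toReal)

/-! ### Continuous-time walk -/

/-- Sample space for the continuous-time walk: a discrete path together with
the i.i.d. exponential interarrival gaps of the driving Poisson process. -/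
abbrev CTPath (d N : ℕ) := (ℕ → Torus d N) × (ℕ → ℝ)

/-- The number of jumps performed up to time `t`. -/
def nJumps (g : ℕ → ℝ) (t : ℝ) : ℕ := sSup {n | ∑ k ∈ Finset.range n, g k ≤ t}

/-- The position of the continuous-time walk at time `t`. -/
def ctPos {d N : ℕ} (ω : CTPath d N) (t : ℝ) : Torus d N := ω.1 (nJumps ω.2 t)

/-- `ν` is the law of an i.i.d. sequence of exponential random variables of
parameter `1`, characterized by its joint survival function. -/
def IsIIDExp (ν : Measure (ℕ → ℝ)) : Prop :=
  IsProbabilityMeasure ν ∧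
  ∀ (n : ℕ) (s : ℕ → ℝ), (∀ k, 0 ≤ s k) →
    ν {g | ∀ k, k ≤ n → s k < g k} =
      ENNReal.ofReal (Real.exp (-(∑ k ∈ Finset.range (n + 1), s k)))

/-- `P` is the law of the continuous-time simple random walk `Y_t = X_{N_t}`
with initial distribution `init`. -/
def IsCTWalk {d N : ℕ} (P : Measure (CTPath d N)) (init : Torus d N → ℝ≥0∞) : Prop :=
  ∃ (μ : Measure (ℕ → Torus d N)) (ν : Measure (ℕ → ℝ)),
    IsWalkLaw μ init ∧ IsIIDExp ν ∧ P = μ.prod ν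

/-- The entrance time `H_V = inf {t ≥ 0 : Y_t ∈ V}`. -/
def hitT {d N : ℕ} (V : Set (Torus d N)) (ω : CTPath d N) : ℝ :=
  sInf {t | 0 ≤ t ∧ ctPos ω t ∈ V}

/-- The entrance time to `V` after time `s`. -/
def hitTAfter {d N : ℕ} (V : Set (Torus d N)) (ω : CTPath d N) (s : ℝ) : ℝ :=
  sInf {t | s ≤ t ∧ ctPos ω t ∈ V}

/-- The exit time `T_V = inf {t ≥ 0 : Y_t ∉ V}`. -/
def exitT {d N : ℕ} (V : Set (Torus d N)) (ω : CTPath d N) : ℝ :=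
  sInf {t | 0 ≤ t ∧ ctPos ω t ∉ V}

/-- The regeneration time `t_* = (N log N)^2`. -/
def tstar (N : ℕ) : ℝ := ((N : ℝ) * Real.log N) ^ 2

/-- The first time `t ≥ s + t_*` such that the walk has avoided `B` during the
whole interval `[t − t_*, t]`. -/
def uEndAfter {d N : ℕ} (B : Set (Torus d N)) (ω : CTPath d N) (s : ℝ) : ℝ :=
  sInf {t | s + tstar N ≤ t ∧ ∀ r, t - tstar N ≤ r → r ≤ t → ctPos ω r ∉ B}

/-- The successive excursion times `(R_k, U_k)` between `A` and (long absences
from) `B`, with the convention `(R_0, U_0) = (0, 0)`. -/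
def excTimes {d N : ℕ} (A B : Set (Torus d N)) (ω : CTPath d N) : ℕ → ℝ × ℝ
  | 0 => (0, 0)
  | k + 1 =>
      let R := hitTAfter A ω (excTimes A B ω k).2
      (R, uEndAfter B ω R)

/-- The range of the continuous-time walk during the time interval `[a, b]`. -/
def ctRange {d N : ℕ} (ω : CTPath d N) (a b : ℝ) : Set (Torus d N) :=
  {v | ∃ t, a ≤ t ∧ t ≤ b ∧ ctPos ω t = v}

/-! ### The killed walk and the quasistationary distribution -/

/-- The action of the substochastic matrix `P^B` (walk killed on `B`) on a
vector `v`. -/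
def killedMul (d N : ℕ) (B : Set (Torus d N)) (v : Torus d N → ℝ) (x : Torus d N) : ℝ :=
  ∑ᶠ y : Torus d N, if y ∉ B ∧ adj x y then v y / (2 * d) else 0

/-- `l` is an eigenvalue of the killed transition matrix `P^B`. -/
def IsKilledEigenvalue (d N : ℕ) (B : Set (Torus d N)) (l : ℝ) : Prop :=
  ∃ v : Torus d N → ℝ, v ≠ 0 ∧ (∀ x ∈ B, v x = 0) ∧
    ∀ x, x ∉ B → killedMul d N B v x = l * v x

/-- `σ` is the quasistationary distribution on `T ∖ B`: the normalized
non-negative principal (Perron–Frobenius) eigenvector of `P^B`. -/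
def IsQSD (d N : ℕ) (B : Set (Torus d N)) (σ : Torus d N → ℝ) : Prop :=
  (∀ x, 0 ≤ σ x) ∧ (∀ x ∈ B, σ x = 0) ∧ (∑ᶠ x, σ x = 1) ∧
  ∃ l : ℝ, (∀ x, x ∉ B → killedMul d N B σ x = l * σ x) ∧
    ∀ l', IsKilledEigenvalue d N B l' → l' ≤ l

/-- The Dirichlet form of the simple random walk on the torus. -/
def dirichlet (d N : ℕ) (g : Torus d N → ℝ) : ℝ :=
  (1 / 2) * ∑ᶠ x : Torus d N, ∑ᶠ y : Torus d N,
    if adj x y then (g x - g y) ^ 2 / (2 * d * (N : ℝ) ^ d) else 0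

end Frag

namespace Frag

section Network

variable {V : Type*} [Fintype V] {p : V → V → ℝ}

/-- Discrete Green's identity for a symmetric stochastic kernel. -/
lemma sum_sum_mul_sub_mul_sub (symm : ∀ x y, p x y = p y x) (row : ∀ x, ∑ y, p x y = 1)
    (u v : V → ℝ) :
    ∑ x, ∑ y, p x y * ((u x - u y) * (v x - v y)) =
      2 * ∑ x, u x * (v x - ∑ y, p x y * v y) := by
  have h1 : ∀ x, ∑ y, p x y * (u x * (v x - v y)) = u x * (v x - ∑ y, p x y * v y) := by
    intro x
    have : ∀ y, p x y * (u x * (v x - v y)) = u x * (p x y * v x - p x y * v y) :=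
      fun y => by ring
    simp_rw [this]
    rw [← Finset.mul_sum, Finset.sum_sub_distrib, ← Finset.sum_mul, row, one_mul]
  have h2 : ∑ x, ∑ y, p x y * (u y * (v y - v x)) =
      ∑ x, ∑ y, p x y * (u x * (v x - v y)) := by
    rw [Finset.sum_comm]
    exact Finset.sum_congr rfl fun x _ => Finset.sum_congr rfl fun y _ => by rw [symm]
  have h3 : ∀ x y, p x y * ((u x - u y) * (v x - v y)) =
      p x y * (u x * (v x - v y)) + p x y * (u y * (v y - v x)) := fun x y => by ring
  simp_rw [h3, Finset.sum_add_distrib]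
  rw [h2, Finset.sum_congr rfl fun x _ => h1 x]
  ring

/-- Variational bounds on the mean of `h`, where `h` solves `(1 - p) h = 1` off `A₁` with zero
boundary values, in terms of the energy of the equilibrium potential `g` of `A₁` relative
to `A₂ᶜ`. -/
theorem energy_bounds (symm : ∀ x y, p x y = p y x) (row : ∀ x, ∑ y, p x y = 1)
    (nonneg : ∀ x y, 0 ≤ p x y) {A₁ A₂ : Set V} (h12 : A₁ ⊆ A₂) (hproper : A₂ ≠ Set.univ)
    {h g : V → ℝ} (h_zero : ∀ x ∈ A₁, h x = 0) (h_nonneg : ∀ x, 0 ≤ h x)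
    (h_eq : ∀ x ∉ A₁, h x = 1 + ∑ y, p x y * h y)
    (g_one : ∀ x ∈ A₁, g x = 1) (g_zero : ∀ x ∉ A₂, g x = 0) (g_le : ∀ x, g x ≤ 1)
    (g_nonneg : ∀ x, 0 ≤ g x) (g_eq : ∀ x ∈ A₂ \ A₁, g x = ∑ y, p x y * g y)
    {m D : ℝ} (hm : m * Fintype.card V = ∑ x, h x)
    (hD : D * (2 * Fintype.card V) = ∑ x, ∑ y, p x y * ((g x - g y) * (g x - g y))) :
    (∀ s : ℝ, (∀ x ∉ A₂, |1 - h x / m| ≤ s) → D * (1 - 2 * s) ≤ 1 / m) ∧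
      1 / m ≤ D / ((A₂ᶜ.ncard : ℝ) / Fintype.card V) ^ 2 := by
  obtain ⟨z, hz⟩ : ∃ z, z ∉ A₂ := by
    by_contra! hcon; exact hproper (Set.eq_univ_of_forall hcon)
  have hn : (0 : ℝ) < Fintype.card V := by exact_mod_cast Fintype.card_pos_iff.2 ⟨z⟩
  set n : ℝ := (Fintype.card V : ℝ)
  have hm0 : 0 < m := by
    have hz1 : 1 ≤ h z := by
      rw [h_eq z fun hA => hz (h12 hA)]
      have := Finset.sum_nonneg fun y (_ : y ∈ Finset.univ) => mul_nonneg (nonneg z y) (h_nonneg y)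
      linarith
    have := Finset.single_le_sum (fun y _ => h_nonneg y) (Finset.mem_univ z)
    by_contra! hcon
    nlinarith
  set Lh : V → ℝ := fun x => h x - ∑ y, p x y * h y with hLh
  set Lg : V → ℝ := fun x => g x - ∑ y, p x y * g y with hLg
  have green := sum_sum_mul_sub_mul_sub symm row
  have sum_Lh : ∑ x, Lh x = 0 := by
    have := green (fun _ => 1) h
    simp only [sub_self, zero_mul, mul_zero, Finset.sum_const_zero, one_mul] at this
    change 0 = 2 * ∑ x, Lh x at this
    linarith
  have sum_Lg : ∑ x, Lg x = 0 := by
    have := green (fun _ => 1) g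
    simp only [sub_self, zero_mul, mul_zero, Finset.sum_const_zero, one_mul] at this
    change 0 = 2 * ∑ x, Lg x at this
    linarith
  have hh : ∑ x, h x * Lh x = m * n := by
    rw [hm]
    refine Finset.sum_congr rfl fun x _ => ?_
    by_cases hx : x ∈ A₁
    · simp [h_zero x hx]
    · have := h_eq x hx
      simp only [hLh]; rw [show h x - ∑ y, p x y * h y = 1 by linarith, mul_one]
  set B : ℝ := ∑ x, (1 - g x) with hB
  have hgh : ∑ x, g x * Lh x = -B := by
    have : ∀ x, g x * Lh x = Lh x - (1 - g x) := by
      intro x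
      by_cases hx : x ∈ A₁
      · simp [g_one x hx]
      · have := h_eq x hx
        simp only [hLh]; rw [show h x - ∑ y, p x y * h y = 1 by linarith]; ring
    simp_rw [this]
    rw [Finset.sum_sub_distrib, sum_Lh, zero_sub]
  have hgg : ∑ x, g x * Lg x = D * n := by
    have := green g g
    rw [← hD] at this; linarith
  have hhg : ∑ x, h x * Lg x = -B := by
    have h1 := green h g
    have h2 := green g h
    have h3 : ∑ x, ∑ y, p x y * ((h x - h y) * (g x - g y)) =
      ∑ x, ∑ y, p x y * ((g x - g y) * (h x - h y)) :=
      Finset.sum_congr rfl fun x _ => Finset.sum_congr rfl fun y _ => by ring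
    change _ = 2 * ∑ x, h x * Lg x at h1
    change _ = 2 * ∑ x, g x * Lh x at h2
    linarith
  have quad : ∀ l : ℝ, 0 ≤ m * n - 2 * l * B + l ^ 2 * (D * n) := by
    intro l
    have h0 : 0 ≤ ∑ x, ∑ y, p x y * (((h x + l * g x) - (h y + l * g y)) *
        ((h x + l * g x) - (h y + l * g y))) :=
      Finset.sum_nonneg fun x _ => Finset.sum_nonneg fun y _ =>
        mul_nonneg (nonneg x y) (mul_self_nonneg _)
    rw [green (fun x => h x + l * g x) fun x => h x + l * g x] at h0
    have h1 : ∀ x, (h x + l * g x) * ((h x + l * g x) - ∑ y, p x y * (h y + l * g y)) =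
        h x * Lh x + l * (g x * Lh x) + l * (h x * Lg x) + l ^ 2 * (g x * Lg x) := by
      intro x
      have : ∑ y, p x y * (h y + l * g y) = ∑ y, p x y * h y + l * ∑ y, p x y * g y := by
        rw [Finset.mul_sum, ← Finset.sum_add_distrib]
        exact Finset.sum_congr rfl fun y _ => by ring
      simp only [hLh, hLg]
      rw [this]; ring
    simp_rw [h1, Finset.sum_add_distrib, ← Finset.mul_sum] at h0
    rw [hh, hgh, hhg, hgg] at h0
    linarith
  constructor
  · intro s hs
    have hpt : ∀ x, m * (1 - s) * (g x * Lg x - Lg x) ≤ -(h x * Lg x) := by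
      intro x
      by_cases hx : x ∈ A₁
      · simp [g_one x hx, h_zero x hx]
      by_cases hx2 : x ∈ A₂
      · have : Lg x = 0 := by
          simp only [hLg]; rw [sub_eq_zero]; exact g_eq x ⟨hx2, hx⟩
        simp [this]
      · have hL : Lg x ≤ 0 := by
          have := Finset.sum_nonneg fun y (_ : y ∈ Finset.univ) =>
            mul_nonneg (nonneg x y) (g_nonneg y)
          simp only [hLg]; rw [g_zero x hx2]; linarith
        have h1 := (abs_le.1 (hs x hx2)).2
        have h2 : m * (1 - s) ≤ h x := by
          have : 1 - s ≤ h x / m := by linarith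
          rwa [le_div_iff₀ hm0, mul_comm] at this
        rw [g_zero x hx2]
        nlinarith
    have hsum := Finset.sum_le_sum fun x (_ : x ∈ Finset.univ) => hpt x
    rw [← Finset.mul_sum, Finset.sum_sub_distrib, hgg, sum_Lg, Finset.sum_neg_distrib, hhg] at hsum
    have h1 := quad m
    rw [le_div_iff₀ hm0]
    have h2 : m * n * (D * (1 - 2 * s) * m) ≤ m * n * 1 := by nlinarith
    exact le_of_mul_le_mul_left h2 (by positivity)
  · have hcard : (A₂ᶜ.ncard : ℝ) ≤ B := by
      rw [Set.ncard_eq_toFinset_card', Finset.card_eq_sum_ones, Nat.cast_sum, hB]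
      calc ∑ x ∈ A₂ᶜ.toFinset, ((1 : ℕ) : ℝ) = ∑ x ∈ A₂ᶜ.toFinset, (1 - g x) :=
            Finset.sum_congr rfl fun x hx => by
              rw [g_zero x (by simpa using hx)]; simp
        _ ≤ _ := Finset.sum_le_sum_of_subset_of_nonneg (Finset.subset_univ _)
            fun x _ _ => by linarith [g_le x]
    have ha : (0 : ℝ) < A₂ᶜ.ncard := by
      exact_mod_cast (Set.ncard_pos (Set.toFinite _)).2 ⟨z, hz⟩
    have hB0 : 0 < B := ha.trans_le hcard
    have h1 := quad (n * m / B)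
    have h2 : B ^ 2 ≤ n ^ 2 * m * D := by
      have e : m * n - 2 * (n * m / B) * B + (n * m / B) ^ 2 * (D * n) =
          n * m * (n ^ 2 * m * D - B ^ 2) / B ^ 2 := by
        field_simp; ring
      rw [e] at h1
      by_contra! hcon
      have : n * m * (n ^ 2 * m * D - B ^ 2) / B ^ 2 < 0 :=
        div_neg_of_neg_of_pos (mul_neg_of_pos_of_neg (by positivity) (by linarith)) (by positivity)
      linarith
    have h3 : (A₂ᶜ.ncard : ℝ) ^ 2 ≤ n ^ 2 * m * D := (pow_le_pow_left₀ ha.le hcard 2).trans h2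
    rw [div_pow, div_div_eq_mul_div, div_le_div_iff₀ hm0 (by positivity)]
    linarith

/-- The weak minimum principle for supersolutions of `(1 - p) u = 0` off `A`. -/
lemma nonneg_of_supersolution (row : ∀ x, ∑ y, p x y = 1) (nonneg : ∀ x y, 0 ≤ p x y)
    {A : Set V} (irred : ∀ S : Set V, S.Nonempty →
      (∀ x ∈ S, x ∉ A → ∀ y, 0 < p x y → y ∈ S) → (S ∩ A).Nonempty)
    {u : V → ℝ} (hA : ∀ x ∈ A, 0 ≤ u x) (hu : ∀ x ∉ A, ∑ y, p x y * u y ≤ u x) (x : V) :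
    0 ≤ u x := by
  have : Nonempty V := ⟨x⟩
  obtain ⟨z, hz⟩ := Finite.exists_min u
  obtain ⟨a, ha, haA⟩ := irred {y | u y = u z} ⟨z, rfl⟩ (by
    intro x hx hxA y hy
    have hx : u x = u z := hx
    have h0 : ∑ y, p x y * (u y - u z) = 0 := by
      refine le_antisymm ?_ (Finset.sum_nonneg fun y _ =>
        mul_nonneg (nonneg x y) (sub_nonneg.2 (hz y)))
      simp_rw [mul_sub]
      rw [Finset.sum_sub_distrib, ← Finset.sum_mul, row, one_mul]
      linarith [hu x hxA]
    have h1 := (Finset.sum_eq_zero_iff_of_nonneg fun y _ =>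
      mul_nonneg (nonneg x y) (sub_nonneg.2 (hz y))).1 h0 y (Finset.mem_univ y)
    exact sub_eq_zero.1 ((mul_eq_zero.1 h1).resolve_left hy.ne'))
  have ha : u a = u z := ha
  exact (hA a haA).trans (ha.le.trans (hz x))

lemma exists_solution (row : ∀ x, ∑ y, p x y = 1) (nonneg : ∀ x y, 0 ≤ p x y)
    {A : Set V} (irred : ∀ S : Set V, S.Nonempty →
      (∀ x ∈ S, x ∉ A → ∀ y, 0 < p x y → y ∈ S) → (S ∩ A).Nonempty) :
    ∃ u : V → ℝ, (∀ x, 0 ≤ u x) ∧ ∀ x ∉ A, u x = 1 + ∑ y, p x y * u y := by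
  let L : (V → ℝ) →ₗ[ℝ] (V → ℝ) :=
    { toFun := fun u x => if x ∈ A then u x else u x - ∑ y, p x y * u y
      map_add' := fun u v => by
        ext x
        by_cases hx : x ∈ A
        · simp [hx]
        · simp only [hx, if_false, Pi.add_apply, mul_add, Finset.sum_add_distrib]; ring
      map_smul' := fun c u => by
        ext x
        by_cases hx : x ∈ A
        · simp [hx]
        · simp only [hx, if_false, Pi.smul_apply, smul_eq_mul, RingHom.id_apply, mul_sub,
            Finset.mul_sum]
          congr 1
          exact Finset.sum_congr rfl fun y _ => by ring }
  have hL : ∀ u x, L u x = if x ∈ A then u x else u x - ∑ y, p x y * u y := fun _ _ => rfl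
  have key : ∀ u, (∀ x, 0 ≤ L u x) → ∀ x, 0 ≤ u x := by
    intro u hu
    refine nonneg_of_supersolution row nonneg irred (fun x hx => ?_) fun x hx => ?_
    · simpa [hL, hx] using hu x
    · simpa [hL, hx] using hu x
  have inj : Function.Injective L := by
    rw [← LinearMap.ker_eq_bot, LinearMap.ker_eq_bot']
    intro u hu
    ext x
    refine le_antisymm ?_ (key u (by simp [hu]) x)
    have := key (-u) (by simp [hu]) x
    simpa using this
  obtain ⟨u, hu⟩ := LinearMap.injective_iff_surjective.1 inj fun x => if x ∈ A then 0 else 1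
  refine ⟨u, key u fun x => ?_, fun x hx => ?_⟩
  · rw [hu]; dsimp only; split_ifs <;> norm_num
  · have := congrFun hu x
    simp only [hL, hx, if_false] at this
    linarith

end Network

instance (n : ℕ) : DiscreteMeasurableSpace (ZMod n) := ⟨fun _ => trivial⟩

section Paths

variable {α : Type*}

/-- The path `x, ω 0, ω 1, …`. -/
def prepend (x : α) (ω : ℕ → α) : ℕ → α
  | 0 => x
  | n + 1 => ω n

/-- The indicator that a path avoids `A` up to time `n`. -/
def avoid (A : Set α) (n : ℕ) (ω : ℕ → α) : ℝ≥0∞ := if ∀ k ≤ n, ω k ∉ A then 1 else 0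

/-- Paths that enter `A` and stay in `B` before they do. -/
def enterBefore (A B : Set α) : Set (ℕ → α) := {ω | ∃ n, ω n ∈ A ∧ ∀ k < n, ω k ∈ B}

lemma avoid_zero_prepend {A : Set α} {x : α} (hx : x ∉ A) (ω : ℕ → α) :
    avoid A 0 (prepend x ω) = 1 := by
  simp [avoid, prepend, hx]

lemma avoid_succ_prepend {A : Set α} {x : α} (hx : x ∉ A) (n : ℕ) (ω : ℕ → α) :
    avoid A (n + 1) (prepend x ω) = avoid A n ω := by
  have : (∀ k ≤ n + 1, prepend x ω k ∉ A) ↔ ∀ k ≤ n, ω k ∉ A := by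
    refine ⟨fun h k hk => h (k + 1) (by omega), fun h k hk => ?_⟩
    cases k with
    | zero => exact hx
    | succ k => exact h k (by omega)
  simp only [avoid, this]

lemma avoid_prepend_of_mem {A : Set α} {x : α} (hx : x ∈ A) (n : ℕ) (ω : ℕ → α) :
    avoid A n (prepend x ω) = 0 := by
  have : ¬ ∀ k ≤ n, prepend x ω k ∉ A := fun h => h 0 (Nat.zero_le _) hx
  simp [avoid, this]

lemma prepend_mem_enterBefore {A B : Set α} {x : α} (hA : x ∉ A) (hB : x ∈ B) (ω : ℕ → α) :
    prepend x ω ∈ enterBefore A B ↔ ω ∈ enterBefore A B := by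
  constructor
  · rintro ⟨n, hn, hk⟩
    cases n with
    | zero => exact absurd hn hA
    | succ n => exact ⟨n, hn, fun k hkn => hk (k + 1) (by omega)⟩
  · rintro ⟨n, hn, hk⟩
    refine ⟨n + 1, hn, fun k hkn => ?_⟩
    cases k with
    | zero => exact hB
    | succ k => exact hk k (by omega)

lemma prepend_mem_enterBefore_of_mem {A B : Set α} {x : α} (hA : x ∈ A) (ω : ℕ → α) :
    prepend x ω ∈ enterBefore A B :=
  ⟨0, hA, fun k hk => absurd hk (Nat.not_lt_zero k)⟩

lemma prepend_notMem_enterBefore {A B : Set α} {x : α} (hA : x ∉ A) (hB : x ∉ B) (ω : ℕ → α) :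
    prepend x ω ∉ enterBefore A B := by
  rintro ⟨n, hn, hk⟩
  cases n with
  | zero => exact hA hn
  | succ n => exact hB (hk 0 n.succ_pos)

variable [MeasurableSpace α]

lemma measurable_prepend (x : α) : Measurable (prepend x) := by
  refine measurable_pi_iff.2 fun n => ?_
  cases n with
  | zero => exact measurable_const
  | succ n => exact measurable_pi_apply n

lemma measurableSet_apply_mem [DiscreteMeasurableSpace α] (k : ℕ) (A : Set α) :
    MeasurableSet {ω : ℕ → α | ω k ∈ A} :=
  measurable_pi_apply (X := fun _ : ℕ => α) k (.of_discrete (s := A))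

lemma measurableSet_cylinder [MeasurableSingletonClass α] (n : ℕ) (w : ℕ → α) :
    MeasurableSet {ω : ℕ → α | ∀ k, k ≤ n → ω k = w k} := by
  simp only [Set.ofPred_forall]
  exact .iInter fun k => .iInter fun _ =>
    measurable_pi_apply (X := fun _ : ℕ => α) k (measurableSet_singleton (w k))

lemma measurable_avoid [DiscreteMeasurableSpace α] (A : Set α) (n : ℕ) :
    Measurable (avoid A n) := by
  refine Measurable.ite ?_ measurable_const measurable_const
  simp only [Set.ofPred_forall]
  exact .iInter fun k => .iInter fun _ => measurableSet_apply_mem k Aᶜ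

lemma measurableSet_enterBefore [DiscreteMeasurableSpace α] (A B : Set α) :
    MeasurableSet (enterBefore A B) := by
  simp only [enterBefore, Set.ofPred_exists, Set.ofPred_and, Set.ofPred_forall]
  exact .iUnion fun n => .inter (measurableSet_apply_mem n A)
    (.iInter fun k => .iInter fun _ => measurableSet_apply_mem k B)

/-- Finite measures on path space are determined by their cylinder probabilities. -/
lemma path_measure_ext [Finite α] [MeasurableSingletonClass α] {μ μ' : Measure (ℕ → α)}
    [IsFiniteMeasure μ]
    (h : ∀ (n : ℕ) (w : ℕ → α),
      μ {ω | ∀ k, k ≤ n → ω k = w k} = μ' {ω | ∀ k, k ≤ n → ω k = w k}) : μ = μ' := by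
  have := Fintype.ofFinite α
  have huniv : ∀ m : Measure (ℕ → α),
      m Set.univ = ∑ a, m {ω | ∀ k, k ≤ 0 → ω k = (fun _ => a) k} := by
    intro m
    have := sum_measure_preimage_singleton (μ := m) Finset.univ
      (f := fun ω : ℕ → α => ω 0) fun y _ => measurable_pi_apply 0 (measurableSet_singleton y)
    rw [Finset.coe_univ, Set.preimage_univ] at this
    rw [← this]
    refine Finset.sum_congr rfl fun a _ => congrArg m ?_
    ext ω; simp
  refine ext_of_generate_finite
    {s | ∃ (n : ℕ) (w : ℕ → α), s = {ω | ∀ k, k ≤ n → ω k = w k}} ?_ ?_ ?_ ?_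
  · apply le_antisymm
    · refine iSup_le fun k => ?_
      rw [← measurable_iff_comap_le]
      refine @measurable_to_countable' _ _ _ _ (MeasurableSpace.generateFrom _) _ fun a => ?_
      have : (fun ω : ℕ → α => ω k) ⁻¹' {a} =
          ⋃ (v : Fin (k + 1) → α), ⋃ (_ : v (Fin.last k) = a),
            {ω | ∀ j, j ≤ k → ω j = if hj : j < k + 1 then v ⟨j, hj⟩ else a} := by
        ext ω
        simp only [Set.mem_preimage, Set.mem_singleton_iff, Set.mem_iUnion, Set.mem_ofPred_eq,
          exists_prop]
        constructor
        · intro hω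
          refine ⟨fun j => ω j, hω, fun j hj => ?_⟩
          rw [dif_pos (by omega)]
        · rintro ⟨v, hv, hω⟩
          rw [hω k le_rfl, dif_pos k.lt_succ_self, ← hv]
          rfl
      rw [this]
      exact .iUnion fun v => .iUnion fun _ => MeasurableSpace.measurableSet_generateFrom ⟨k, _, rfl⟩
    · refine MeasurableSpace.generateFrom_le ?_
      rintro _ ⟨n, w, rfl⟩
      exact measurableSet_cylinder n w
  · rintro _ ⟨n, w, rfl⟩ _ ⟨m, v, rfl⟩ ⟨ω, hω1, hω2⟩
    refine ⟨max n m, ω, ?_⟩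
    ext ω'
    simp only [Set.mem_inter_iff, Set.mem_ofPred_eq]
    constructor
    · rintro ⟨h1, h2⟩ k hk
      rcases le_max_iff.1 hk with hk | hk
      · rw [h1 k hk, hω1 k hk]
      · rw [h2 k hk, hω2 k hk]
    · exact fun h => ⟨fun k hk => (h k (hk.trans (le_max_left _ _))).trans (hω1 k hk),
        fun k hk => (h k (hk.trans (le_max_right _ _))).trans (hω2 k hk)⟩
  · rintro _ ⟨n, w, rfl⟩
    exact h n w
  · rw [huniv, huniv]
    exact Finset.sum_congr rfl fun a _ => h _ _

end Paths

section Walk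

variable {d N : ℕ} [NeZero N] {μ : Torus d N → Measure (ℕ → Torus d N)}

lemma sum_srwStep (hμ : ∀ x, IsWalkLaw (μ x) (pointInit x)) (x : Torus d N) :
    ∑ y, srwStep x y = 1 := by
  have := (hμ x).1
  have h := sum_measure_preimage_singleton (μ := μ x) Finset.univ
    (f := fun ω : ℕ → Torus d N => (ω 0, ω 1)) fun y _ =>
      (by fun_prop : Measurable fun ω : ℕ → Torus d N => (ω 0, ω 1)) (measurableSet_singleton y)
  rw [Finset.coe_univ, Set.preimage_univ, measure_univ, Fintype.sum_prod_type] at h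
  rw [← h]
  have key : ∀ a b : Torus d N,
      μ x ((fun ω : ℕ → Torus d N => (ω 0, ω 1)) ⁻¹' {(a, b)}) = pointInit x a * srwStep a b := by
    intro a b
    have := (hμ x).2 1 fun k => if k = 0 then a else b
    simp only [Finset.prod_range_one, if_true, zero_add, one_ne_zero, if_false] at this
    rw [← this]
    congr 1
    ext ω
    simp only [Set.mem_preimage, Set.mem_singleton_iff, Prod.mk.injEq, Set.mem_ofPred_eq]
    constructor
    · rintro ⟨h0, h1⟩ k hk
      interval_cases k <;> simp [h0, h1]
    · exact fun hk => ⟨by simpa using hk 0 (by omega), by simpa using hk 1 le_rfl⟩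
  simp [key, pointInit]

/-- The Markov property at time one. -/
lemma walk_eq_sum_map_prepend (hμ : ∀ x, IsWalkLaw (μ x) (pointInit x)) (x : Torus d N) :
    μ x = ∑ y, srwStep x y • (μ y).map (prepend x) := by
  have := (hμ x).1
  refine path_measure_ext fun n w => ?_
  rw [(hμ x).2, Measure.finsetSum_apply]
  simp_rw [Measure.smul_apply, Measure.map_apply (measurable_prepend x) (measurableSet_cylinder n w), smul_eq_mul]
  cases n with
  | zero =>
    have : prepend x ⁻¹' {ω | ∀ k, k ≤ 0 → ω k = w k} = {_ω | x = w 0} := by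
      ext ω; simp [prepend]
    rw [this]
    by_cases hx : x = w 0
    · have := fun y => (hμ y).1
      simp [hx, pointInit, sum_srwStep hμ]
    · simp [hx, pointInit, Ne.symm hx]
  | succ n =>
    have : prepend x ⁻¹' {ω | ∀ k, k ≤ n + 1 → ω k = w k} =
        {ω | x = w 0 ∧ ∀ k, k ≤ n → ω k = w (k + 1)} := by
      ext ω
      refine ⟨fun h => ⟨h 0 (by omega), fun k hk => h (k + 1) (by omega)⟩, fun h k hk => ?_⟩
      cases k with
      | zero => exact h.1
      | succ k => exact h.2 k (by omega)
    rw [this]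
    by_cases hx : x = w 0
    · simp only [hx, true_and]
      simp_rw [(hμ _).2 n fun k => w (k + 1)]
      simp [pointInit, Finset.prod_range_succ', mul_comm]
    · simp [hx, pointInit, Ne.symm hx]

lemma lintegral_walk (hμ : ∀ x, IsWalkLaw (μ x) (pointInit x)) (x : Torus d N)
    {F : (ℕ → Torus d N) → ℝ≥0∞} (hF : Measurable F) :
    ∫⁻ ω, F ω ∂μ x = ∑ y, srwStep x y * ∫⁻ ω, F (prepend x ω) ∂μ y := by
  conv_lhs => rw [walk_eq_sum_map_prepend hμ x]
  rw [lintegral_finsetSum_measure]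
  simp_rw [lintegral_smul_measure, smul_eq_mul, lintegral_map hF (measurable_prepend x)]

lemma walk_eq_sum_init (hμ : ∀ x, IsWalkLaw (μ x) (pointInit x)) {init : Torus d N → ℝ≥0∞}
    {m : Measure (ℕ → Torus d N)} (hm : IsWalkLaw m init) : m = ∑ x, init x • μ x := by
  have := hm.1
  refine path_measure_ext fun n w => ?_
  rw [hm.2, Measure.finsetSum_apply]
  simp_rw [Measure.smul_apply, (hμ _).2, smul_eq_mul]
  simp [pointInit]

end Walk

section Gaps

variable {ν : Measure (ℕ → ℝ)}

lemma measurableSet_forall_lt (F : Set ℕ) (s : ℕ → ℝ) :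
    MeasurableSet {g : ℕ → ℝ | ∀ k ∈ F, s k < g k} := by
  simp only [Set.ofPred_forall]
  exact .iInter fun k => .iInter fun _ => measurableSet_lt measurable_const (measurable_pi_apply k)

lemma IsIIDExp.ae_pos (hν : IsIIDExp ν) : ∀ᵐ g ∂ν, ∀ k, 0 < g k := by
  have := hν.1
  refine ae_all_iff.2 fun n => ?_
  have h := hν.2 n (fun _ => 0) fun _ => le_rfl
  simp only [Finset.sum_const_zero, neg_zero, Real.exp_zero, ENNReal.ofReal_one] at h
  have hmem := (mem_ae_iff_prob_eq_one (measurableSet_forall_lt (Set.Iic n) fun _ => 0)).2 h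
  filter_upwards [hmem] with g hg
  exact hg n (Set.mem_Iic.2 le_rfl)

lemma IsIIDExp.measure_forall_lt (hν : IsIIDExp ν) (F : Finset ℕ) {s : ℕ → ℝ}
    (hs : ∀ k, 0 ≤ s k) :
    ν {g | ∀ k ∈ F, s k < g k} = ENNReal.ofReal (Real.exp (-∑ k ∈ F, s k)) := by
  have h := hν.2 (F.sup id) (fun k => if k ∈ F then s k else 0) fun k => by
    split_ifs; exacts [hs k, le_rfl]
  have hF : ∀ k ∈ F, k ≤ F.sup id := fun k hk => Finset.le_sup (f := id) hk
  have hinter : Finset.range (F.sup id + 1) ∩ F = F :=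
    Finset.inter_eq_right.2 fun k hk => Finset.mem_range.2 (Nat.lt_succ_of_le (hF k hk))
  rw [Finset.sum_ite_mem, hinter] at h
  rw [← h]
  refine measure_congr (eventuallyEq_set.2 ?_)
  filter_upwards [hν.ae_pos] with g hg
  refine ⟨fun hk k _ => ?_, fun hk k hkF => by simpa [hkF] using hk k (hF k hkF)⟩
  by_cases hkF : k ∈ F
  · simpa [hkF] using hk k hkF
  · simpa [hkF] using hg k

lemma IsIIDExp.measure_lt (hν : IsIIDExp ν) (k : ℕ) {t : ℝ} (ht : 0 ≤ t) :
    ν {g | t < g k} = ENNReal.ofReal (Real.exp (-t)) := by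
  simpa using hν.measure_forall_lt {k} (s := fun _ => t) fun _ => ht

lemma IsIIDExp.lintegral_gap (hν : IsIIDExp ν) (k : ℕ) :
    ∫⁻ g, ENNReal.ofReal (g k) ∂ν = 1 := by
  rw [lintegral_eq_lintegral_meas_lt ν (hν.ae_pos.mono fun g hg => (hg k).le)
    (measurable_pi_apply k).aemeasurable,
    setLIntegral_congr_fun measurableSet_Ioi fun t ht => hν.measure_lt k (le_of_lt ht),
    ← ofReal_integral_eq_lintegral_ofReal (integrableOn_exp_neg_Ioi 0)
      (Eventually.of_forall fun t => (Real.exp_pos _).le), integral_exp_neg_Ioi_zero,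
    ENNReal.ofReal_one]

lemma IsIIDExp.ae_frequently (hν : IsIIDExp ν) : ∀ᵐ g ∂ν, ∃ᶠ n in atTop, 1 < g n := by
  have := hν.1
  have hmeas : ∀ n : ℕ, MeasurableSet {g : ℕ → ℝ | 1 < g n} := fun n =>
    measurableSet_lt measurable_const (measurable_pi_apply n)
  have hindep : ProbabilityTheory.iIndepSet (fun n : ℕ => {g : ℕ → ℝ | 1 < g n}) ν := by
    rw [ProbabilityTheory.iIndepSet_iff_meas_biInter hmeas]
    intro F
    have h := hν.measure_forall_lt F (s := fun _ => 1) fun _ => zero_le_one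
    have hset : (⋂ i ∈ F, {g : ℕ → ℝ | 1 < g i}) = {g | ∀ k ∈ F, 1 < g k} := by
      ext g; simp
    rw [hset, h, Finset.prod_congr rfl fun k _ => hν.measure_lt k zero_le_one,
      Finset.prod_const, ← ENNReal.ofReal_pow (Real.exp_pos _).le, ← Real.exp_nat_mul]
    simp
  have h1 := ProbabilityTheory.measure_limsup_eq_one hmeas hindep (by
    simp_rw [hν.measure_lt _ zero_le_one]
    exact ENNReal.tsum_const_eq_top_of_ne_zero (by simp [Real.exp_pos]))
  have h2 := (mem_ae_iff_prob_eq_one (MeasurableSet.measurableSet_limsup hmeas)).2 h1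
  filter_upwards [h2] with g hg
  rwa [mem_limsup_iff_frequently_mem] at hg

/-- The jump times are strictly increasing and do not accumulate. -/
def NonExplosive (g : ℕ → ℝ) : Prop :=
  (∀ k, 0 < g k) ∧ ∀ t, ∃ n, t < ∑ k ∈ Finset.range n, g k

lemma IsIIDExp.ae_nonExplosive (hν : IsIIDExp ν) : ∀ᵐ g ∂ν, NonExplosive g := by
  filter_upwards [hν.ae_pos, hν.ae_frequently] with g hpos hfreq
  refine ⟨hpos, ?_⟩
  have h : ∀ m : ℕ, ∃ n, (m : ℝ) ≤ ∑ k ∈ Finset.range n, g k := by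
    intro m
    induction m with
    | zero => exact ⟨0, by simp⟩
    | succ m ih =>
      obtain ⟨n, hn⟩ := ih
      obtain ⟨n', hn', hg⟩ := (frequently_atTop.1 hfreq) n
      refine ⟨n' + 1, ?_⟩
      rw [Finset.sum_range_succ]
      have := Finset.sum_le_sum_of_subset_of_nonneg (f := g) (Finset.range_mono hn')
        fun k _ _ => (hpos k).le
      push_cast
      linarith
  intro t
  obtain ⟨m, hm⟩ := exists_nat_gt t
  obtain ⟨n, hn⟩ := h m
  exact ⟨n, hm.trans_le hn⟩

variable {g : ℕ → ℝ}

lemma NonExplosive.strictMono (hg : NonExplosive g) :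
    StrictMono fun n => ∑ k ∈ Finset.range n, g k :=
  strictMono_nat_of_lt_succ fun n => by
    rw [Finset.sum_range_succ]; linarith [hg.1 n]

lemma NonExplosive.nJumps_sum (hg : NonExplosive g) (n : ℕ) :
    nJumps g (∑ k ∈ Finset.range n, g k) = n := by
  have : {m | ∑ k ∈ Finset.range m, g k ≤ ∑ k ∈ Finset.range n, g k} = Set.Iic n := by
    ext m; exact hg.strictMono.le_iff_le
  rw [nJumps, this, csSup_Iic]

lemma NonExplosive.sum_nJumps_le (hg : NonExplosive g) {t : ℝ} (ht : 0 ≤ t) :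
    ∑ k ∈ Finset.range (nJumps g t), g k ≤ t := by
  obtain ⟨n, hn⟩ := hg.2 t
  refine Nat.sSup_mem (s := {m | ∑ k ∈ Finset.range m, g k ≤ t}) ⟨0, by simpa using ht⟩
    ⟨n, fun m hm => ?_⟩
  exact hg.strictMono.le_iff_le.1 ((show ∑ k ∈ Finset.range m, g k ≤ t from hm).trans hn.le)

variable {d N : ℕ} {V A B : Set (Torus d N)} {ω : ℕ → Torus d N}

lemma NonExplosive.hitT_eq (hg : NonExplosive g) {n : ℕ} (hn : ω n ∈ V)
    (hlt : ∀ k < n, ω k ∉ V) : hitT V (ω, g) = ∑ k ∈ Finset.range n, g k := by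
  refine IsLeast.csInf_eq ⟨⟨Finset.sum_nonneg fun k _ => (hg.1 k).le, ?_⟩, ?_⟩
  · simpa [ctPos, hg.nJumps_sum] using hn
  · rintro t ⟨ht, hV⟩
    have : n ≤ nJumps g t := by
      by_contra! hcon
      exact hlt _ hcon hV
    exact (hg.strictMono.monotone this).trans (hg.sum_nJumps_le ht)

lemma exists_first (h : ∃ n, ω n ∈ V) : ∃ n, ω n ∈ V ∧ ∀ k < n, ω k ∉ V :=
  ⟨Nat.find h, Nat.find_spec h, fun _ hk => Nat.find_min h hk⟩

lemma NonExplosive.ofReal_hitT (hg : NonExplosive g) (h : ∃ n, ω n ∈ V) :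
    hitT V (ω, g) = (∑' n, avoid V n ω * ENNReal.ofReal (g n)).toReal := by
  obtain ⟨n, hn, hlt⟩ := exists_first h
  have h1 : ∀ k ∉ Finset.range n, avoid V k ω * ENNReal.ofReal (g k) = 0 := by
    intro k hk
    have : ¬ ∀ j ≤ k, ω j ∉ V := fun hj => hj n (by simpa using hk) hn
    simp [avoid, this]
  have h2 : ∀ k ∈ Finset.range n,
      avoid V k ω * ENNReal.ofReal (g k) = ENNReal.ofReal (g k) := by
    intro k hk
    have : ∀ j ≤ k, ω j ∉ V := fun j hj => hlt j (hj.trans_lt (Finset.mem_range.1 hk))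
    rw [avoid, if_pos this, one_mul]
  rw [hg.hitT_eq hn hlt, tsum_eq_sum h1, Finset.sum_congr rfl h2,
    ← ENNReal.ofReal_sum_of_nonneg fun k _ => (hg.1 k).le,
    ENNReal.toReal_ofReal (Finset.sum_nonneg fun k _ => (hg.1 k).le)]

lemma NonExplosive.hitT_le_exitT_iff (hg : NonExplosive g)
    (hA : ∃ n, ω n ∈ A) (hB : ∃ n, ω n ∈ Bᶜ) :
    hitT A (ω, g) ≤ exitT B (ω, g) ↔ ω ∈ enterBefore A B := by
  obtain ⟨n, hn, hlt⟩ := exists_first hA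
  obtain ⟨m, hm, hmlt⟩ := exists_first hB
  have : exitT B (ω, g) = ∑ k ∈ Finset.range m, g k := hg.hitT_eq hm hmlt
  rw [hg.hitT_eq hn hlt, this]
  refine hg.strictMono.le_iff_le.trans ⟨fun h => ?_, ?_⟩
  · exact ⟨n, hn, fun k hk => not_not.1 (hmlt k (hk.trans_le h))⟩
  · rintro ⟨l, hl, hk⟩
    have h1 : n ≤ l := by
      by_contra! hcon
      exact hlt l hcon hl
    have h2 : l ≤ m := by
      by_contra! hcon
      exact hm (hk m hcon)
    exact h1.trans h2

lemma integral_hitT [NeZero N] {μ : Measure (ℕ → Torus d N)} [IsProbabilityMeasure μ]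
    (hν : IsIIDExp ν) (hfin : ∫⁻ ω, ∑' n, avoid V n ω ∂μ ≠ ∞)
    (hhit : ∀ᵐ ω ∂μ, ∃ n, ω n ∈ V) :
    ∫ ω, hitT V ω ∂(μ.prod ν) = (∫⁻ ω, ∑' n, avoid V n ω ∂μ).toReal := by
  have := hν.1
  have hmeas : ∀ n, Measurable fun ω : CTPath d N => avoid V n ω.1 * ENNReal.ofReal (ω.2 n) :=
    fun n => ((measurable_avoid V n).comp measurable_fst).mul
      ((measurable_pi_apply n).comp measurable_snd).ennreal_ofReal
  have hl : ∫⁻ ω, ∑' n, avoid V n ω.1 * ENNReal.ofReal (ω.2 n) ∂(μ.prod ν) =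
      ∫⁻ ω, ∑' n, avoid V n ω ∂μ := by
    rw [lintegral_tsum fun n => (hmeas n).aemeasurable,
      lintegral_tsum fun n => (measurable_avoid V n).aemeasurable]
    refine tsum_congr fun n => ?_
    rw [lintegral_prod_mul (measurable_avoid V n).aemeasurable
      (g := fun g : ℕ → ℝ => ENNReal.ofReal (g n))
      (measurable_pi_apply n).ennreal_ofReal.aemeasurable, hν.lintegral_gap, mul_one]
  have hM : Measurable fun ω : CTPath d N => ∑' n, avoid V n ω.1 * ENNReal.ofReal (ω.2 n) :=
    Measurable.tsum hmeas
  rw [← hl, ← integral_toReal hM.aemeasurable (ae_lt_top hM (hl ▸ hfin))]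
  refine integral_congr_ae ?_
  filter_upwards [Measure.quasiMeasurePreserving_fst.ae hhit,
    Measure.quasiMeasurePreserving_snd.ae hν.ae_nonExplosive] with ω h1 h2
  exact h2.ofReal_hitT h1

lemma measure_hitT_le_exitT [NeZero N] {μ : Measure (ℕ → Torus d N)} [IsProbabilityMeasure μ]
    (hν : IsIIDExp ν) (hA : ∀ᵐ ω ∂μ, ∃ n, ω n ∈ A)
    (hB : ∀ᵐ ω ∂μ, ∃ n, ω n ∈ Bᶜ) :
    (μ.prod ν) {ω | hitT A ω ≤ exitT B ω} = μ (enterBefore A B) := by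
  have := hν.1
  have h : {ω : CTPath d N | hitT A ω ≤ exitT B ω} =ᵐ[μ.prod ν]
      (enterBefore A B ×ˢ Set.univ : Set (CTPath d N)) := by
    refine eventuallyEq_set.2 ?_
    filter_upwards [Measure.quasiMeasurePreserving_fst.ae hA,
      Measure.quasiMeasurePreserving_fst.ae hB,
      Measure.quasiMeasurePreserving_snd.ae hν.ae_nonExplosive] with ω h1 h2 h3
    simpa using h3.hitT_le_exitT_iff h1 h2
  rw [measure_congr h, Measure.prod_prod, measure_univ, mul_one]

end Gaps

section Torus

variable {d N : ℕ}

lemma adj_symm {R : Type*} [AddGroupWithOne R] {x y : Fin d → R} (h : adj x y) : adj y x :=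
  ⟨h.1.symm, h.2.imp fun _ hi => ⟨hi.1.symm, fun j hj => (hi.2 j hj).symm⟩⟩

lemma srwStep_comm {R : Type*} [AddGroupWithOne R] (x y : Fin d → R) :
    srwStep x y = srwStep y x := by
  have : adj x y ↔ adj y x := ⟨adj_symm, adj_symm⟩
  simp only [srwStep, this]

lemma toReal_srwStep {R : Type*} [AddGroupWithOne R] (x y : Fin d → R) :
    (srwStep x y).toReal = if adj x y then (2 * d : ℝ)⁻¹ else 0 := by
  unfold srwStep
  split_ifs <;> simp

lemma srwStep_ne_top {R : Type*} [AddGroupWithOne R] (hd : 0 < d) (x y : Fin d → R) :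
    srwStep x y ≠ ∞ := by
  unfold srwStep
  split_ifs
  · exact ENNReal.inv_ne_top.2 (by exact_mod_cast (by omega : 2 * d ≠ 0))
  · exact ENNReal.zero_ne_top

lemma torus_irreducible [NeZero N] (hd : 0 < d) {A : Set (Torus d N)} (hA : A.Nonempty)
    (S : Set (Torus d N)) (hS : S.Nonempty)
    (hcl : ∀ x ∈ S, x ∉ A → ∀ y, 0 < (srwStep x y).toReal → y ∈ S) : (S ∩ A).Nonempty := by
  by_contra hdisj
  rw [Set.not_nonempty_iff_eq_empty] at hdisj
  have hSA : ∀ x ∈ S, x ∉ A := fun x hx hxA =>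
    Set.notMem_empty x (hdisj ▸ (⟨hx, hxA⟩ : x ∈ S ∩ A))
  let G : AddSubmonoid (Torus d N) :=
    { carrier := {z | ∀ x ∈ S, x + z ∈ S}
      zero_mem' := fun x hx => by simpa using hx
      add_mem' := fun {a b} ha hb x hx => by
        rw [← add_assoc]; exact hb _ (ha x hx) }
  have hG : ∀ z, z ∈ G ↔ ∀ x ∈ S, x + z ∈ S := fun _ => Iff.rfl
  have hsingle : ∀ i : Fin d, (Pi.single i 1 : Torus d N) ∈ G := by
    intro i
    refine (hG _).2 fun x hx => ?_
    by_cases hne : x = x + Pi.single i 1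
    · rwa [← hne]
    · refine hcl x hx (hSA x hx) _ ?_
      rw [toReal_srwStep, if_pos]
      · have : (0 : ℝ) < d := by exact_mod_cast hd
        positivity
      · exact ⟨hne, i, Or.inl (by simp), fun j hj => by simp [hj]⟩
  have hall : ∀ z, z ∈ G := by
    intro z
    rw [← Finset.univ_sum_single z]
    refine G.sum_mem fun i _ => ?_
    have : (Pi.single i (z i) : Torus d N) = (z i).val • Pi.single i 1 := by
      rw [← Pi.single_smul]
      congr 1
      simp
    rw [this]
    exact G.nsmul_mem (hsingle i) _
  obtain ⟨x, hx⟩ := hS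
  obtain ⟨a, ha⟩ := hA
  have := (hG _).1 (hall (a - x)) x hx
  rw [add_sub_cancel] at this
  exact hSA a this ha

variable [NeZero N] {μ : Torus d N → Measure (ℕ → Torus d N)}

lemma sum_toReal_srwStep (hd : 0 < d) (hμ : ∀ x, IsWalkLaw (μ x) (pointInit x))
    (x : Torus d N) : ∑ y, (srwStep x y).toReal = 1 := by
  rw [← ENNReal.toReal_sum fun y _ => srwStep_ne_top hd x y, sum_srwStep hμ, ENNReal.toReal_one]

lemma dirichlet_eq (g : Torus d N → ℝ) :
    dirichlet d N g * (2 * Fintype.card (Torus d N)) =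
      ∑ x, ∑ y, (srwStep x y).toReal * ((g x - g y) * (g x - g y)) := by
  have hN : (0 : ℝ) < N := by exact_mod_cast Nat.pos_of_ne_zero (NeZero.ne N)
  have hcard : (Fintype.card (Torus d N) : ℝ) = (N : ℝ) ^ d := by
    simp [Fintype.card_pi, ZMod.card]
  simp only [dirichlet, finsum_eq_sum_of_fintype, hcard]
  have : ∀ x y : Torus d N,
      (if adj x y then (g x - g y) ^ 2 / (2 * d * (N : ℝ) ^ d) else 0) =
        (srwStep x y).toReal * ((g x - g y) * (g x - g y)) * ((N : ℝ) ^ d)⁻¹ := by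
    intro x y
    rw [toReal_srwStep]
    split_ifs
    · rw [div_eq_mul_inv, mul_inv]; ring
    · simp
  simp_rw [this, ← Finset.sum_mul]
  field_simp

lemma lintegral_avoid_of_mem (hμ : ∀ x, IsWalkLaw (μ x) (pointInit x)) {A : Set (Torus d N)}
    {x : Torus d N} (hx : x ∈ A) (n : ℕ) : ∫⁻ ω, avoid A n ω ∂μ x = 0 := by
  rw [lintegral_walk hμ x (measurable_avoid A n)]
  simp [avoid_prepend_of_mem hx]

lemma lintegral_avoid_zero (hμ : ∀ x, IsWalkLaw (μ x) (pointInit x)) {A : Set (Torus d N)}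
    {x : Torus d N} (hx : x ∉ A) : ∫⁻ ω, avoid A 0 ω ∂μ x = 1 := by
  have := fun x => (hμ x).1
  rw [lintegral_walk hμ x (measurable_avoid A 0)]
  simp [avoid_zero_prepend hx, sum_srwStep hμ]

lemma lintegral_avoid_succ (hμ : ∀ x, IsWalkLaw (μ x) (pointInit x)) {A : Set (Torus d N)}
    {x : Torus d N} (hx : x ∉ A) (n : ℕ) :
    ∫⁻ ω, avoid A (n + 1) ω ∂μ x = ∑ y, srwStep x y * ∫⁻ ω, avoid A n ω ∂μ y := by
  rw [lintegral_walk hμ x (measurable_avoid A (n + 1))]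
  simp [avoid_succ_prepend hx]

/-- The mean number of steps before the walk enters `A`. -/
def meanHit (μ : Torus d N → Measure (ℕ → Torus d N)) (A : Set (Torus d N)) (x : Torus d N) :
    ℝ≥0∞ := ∫⁻ ω, ∑' n, avoid A n ω ∂μ x

lemma meanHit_eq_tsum (A : Set (Torus d N)) (x : Torus d N) :
    meanHit μ A x = ∑' n, ∫⁻ ω, avoid A n ω ∂μ x :=
  lintegral_tsum fun n => (measurable_avoid A n).aemeasurable

lemma meanHit_of_mem (hμ : ∀ x, IsWalkLaw (μ x) (pointInit x)) {A : Set (Torus d N)}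
    {x : Torus d N} (hx : x ∈ A) : meanHit μ A x = 0 := by
  simp [meanHit_eq_tsum, lintegral_avoid_of_mem hμ hx]

lemma meanHit_of_notMem (hμ : ∀ x, IsWalkLaw (μ x) (pointInit x)) {A : Set (Torus d N)}
    {x : Torus d N} (hx : x ∉ A) :
    meanHit μ A x = 1 + ∑ y, srwStep x y * meanHit μ A y := by
  rw [meanHit_eq_tsum, tsum_eq_zero_add' ENNReal.summable, lintegral_avoid_zero hμ hx]
  simp_rw [lintegral_avoid_succ hμ hx]
  rw [Summable.tsum_finsetSum fun _ _ => ENNReal.summable]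
  simp_rw [ENNReal.tsum_mul_left, meanHit_eq_tsum]

lemma meanHit_ne_top (hd : 0 < d) (hμ : ∀ x, IsWalkLaw (μ x) (pointInit x))
    {A : Set (Torus d N)} (hA : A.Nonempty) (x : Torus d N) : meanHit μ A x ≠ ∞ := by
  obtain ⟨u, hu0, hu⟩ := exists_solution (p := fun x y : Torus d N => (srwStep x y).toReal)
    (sum_toReal_srwStep hd hμ) (fun _ _ => ENNReal.toReal_nonneg) (torus_irreducible hd hA)
  have key : ∀ n x, ∑ k ∈ Finset.range n, ∫⁻ ω, avoid A k ω ∂μ x ≤ ENNReal.ofReal (u x) := by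
    intro n
    induction n with
    | zero => simp
    | succ n ih =>
      intro x
      by_cases hx : x ∈ A
      · simp [lintegral_avoid_of_mem hμ hx]
      · rw [Finset.sum_range_succ', lintegral_avoid_zero hμ hx, hu x hx]
        simp_rw [lintegral_avoid_succ hμ hx]
        rw [Finset.sum_comm, add_comm, ENNReal.ofReal_add zero_le_one
          (Finset.sum_nonneg fun y _ => mul_nonneg ENNReal.toReal_nonneg (hu0 y)),
          ENNReal.ofReal_one,
          ENNReal.ofReal_sum_of_nonneg fun y _ => mul_nonneg ENNReal.toReal_nonneg (hu0 y)]
        gcongr with y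
        rw [← Finset.mul_sum, ENNReal.ofReal_mul ENNReal.toReal_nonneg,
          ENNReal.ofReal_toReal (srwStep_ne_top hd x y)]
        gcongr
        exact ih y
  rw [meanHit_eq_tsum]
  exact ne_top_of_le_ne_top ENNReal.ofReal_ne_top
    (ENNReal.tsum_le_of_sum_range_le fun n => key n x)

lemma ae_hit {m : Measure (ℕ → Torus d N)} {A : Set (Torus d N)}
    (h : ∫⁻ ω, ∑' n, avoid A n ω ∂m ≠ ∞) : ∀ᵐ ω ∂m, ∃ n, ω n ∈ A := by
  filter_upwards [ae_lt_top (Measurable.tsum fun n => measurable_avoid A n) h] with ω hω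
  by_contra! hcon
  refine hω.ne ?_
  have : ∀ n, avoid A n ω = 1 := fun n => if_pos fun k _ => hcon k
  simp [this]

lemma measure_enterBefore_of_mem (hμ : ∀ x, IsWalkLaw (μ x) (pointInit x))
    {A B : Set (Torus d N)} {x : Torus d N} (hx : x ∈ A) : μ x (enterBefore A B) = 1 := by
  have := fun x => (hμ x).1
  rw [← lintegral_indicator_one (measurableSet_enterBefore A B), lintegral_walk hμ x
    (measurable_one.indicator (measurableSet_enterBefore A B))]
  simp [Set.indicator, prepend_mem_enterBefore_of_mem hx, sum_srwStep hμ]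

lemma measure_enterBefore_of_notMem (hμ : ∀ x, IsWalkLaw (μ x) (pointInit x))
    {A B : Set (Torus d N)} {x : Torus d N} (hA : x ∉ A) (hB : x ∉ B) :
    μ x (enterBefore A B) = 0 := by
  rw [← lintegral_indicator_one (measurableSet_enterBefore A B), lintegral_walk hμ x
    (measurable_one.indicator (measurableSet_enterBefore A B))]
  simp [Set.indicator, prepend_notMem_enterBefore hA hB]

lemma measure_enterBefore (hμ : ∀ x, IsWalkLaw (μ x) (pointInit x))
    {A B : Set (Torus d N)} {x : Torus d N} (hA : x ∉ A) (hB : x ∈ B) :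
    μ x (enterBefore A B) = ∑ y, srwStep x y * μ y (enterBefore A B) := by
  simp_rw [← lintegral_indicator_one (measurableSet_enterBefore A B)]
  rw [lintegral_walk hμ x (measurable_one.indicator (measurableSet_enterBefore A B))]
  simp [Set.indicator, prepend_mem_enterBefore hA hB]

end Torus

/-- **Proposition (Dirichlet form bounds on expected entrance times).**
For `A₁ ⊆ A₂ ⊊ T` with `A₁ ≠ ∅`, with `g(x) = P_x[H_{A₁} ≤ T_{A₂}]` and
`f_{A₁}(x) = 1 − E_x[H_{A₁}]/E[H_{A₁}]`:
`D(g,g)(1 − 2 sup_{x ∉ A₂} |f_{A₁}(x)|) ≤ 1/E[H_{A₁}] ≤ D(g,g)/π(T∖A₂)²`. -/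
theorem dirichlet_hitting_bounds
    (d N : ℕ) (hd : 3 ≤ d) (hN : 1 ≤ N)
    (A₁ A₂ : Set (Torus d N)) (h12 : A₁ ⊆ A₂) (hne : A₁.Nonempty)
    (hproper : A₂ ≠ Set.univ)
    (Px : Torus d N → Measure (CTPath d N))
    (hPx : ∀ x, IsCTWalk (Px x) (pointInit x))
    (P : Measure (CTPath d N)) (hP : IsCTWalk P (unifInit d N)) :
    dirichlet d N (fun x => ((Px x) {ω | hitT A₁ ω ≤ exitT A₂ ω}).toReal) *
        (1 - 2 * sSup ((fun x : Torus d N =>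
            |1 - (∫ ω, hitT A₁ ω ∂(Px x)) / (∫ ω, hitT A₁ ω ∂P)|) '' A₂ᶜ)) ≤
      1 / (∫ ω, hitT A₁ ω ∂P) ∧
    1 / (∫ ω, hitT A₁ ω ∂P) ≤
      dirichlet d N (fun x => ((Px x) {ω | hitT A₁ ω ≤ exitT A₂ ω}).toReal) /
        ((A₂ᶜ.ncard : ℝ) / (N : ℝ) ^ d) ^ 2 := by

  have : NeZero N := ⟨by omega⟩
  have hd0 : 0 < d := by omega
  choose μ ν hμ hν hprod using hPx
  obtain ⟨m, ν₀, hm, hν₀, rfl⟩ := hP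
  have hμp := fun x => (hμ x).1
  have hmp := hm.1
  have hne2 : A₂ᶜ.Nonempty := Set.nonempty_compl.2 hproper
  have fin₁ := meanHit_ne_top hd0 hμ hne
  have fin₂ := meanHit_ne_top hd0 hμ hne2
  have hcard : (Fintype.card (Torus d N) : ℝ) = (N : ℝ) ^ d := by
    simp [Fintype.card_pi, ZMod.card]
  have hNd : (N : ℝ≥0∞) ^ d ≠ 0 := pow_ne_zero _ (by exact_mod_cast NeZero.ne N)
  have hx : ∀ x, ∫ ω, hitT A₁ ω ∂(Px x) = (meanHit μ A₁ x).toReal := fun x => by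
    rw [hprod]
    exact integral_hitT (hν x) (fin₁ x) (ae_hit (fin₁ x))
  have hg : ∀ x, (Px x) {ω | hitT A₁ ω ≤ exitT A₂ ω} = μ x (enterBefore A₁ A₂) := fun x => by
    rw [hprod]
    exact measure_hitT_le_exitT (hν x) (ae_hit (fin₁ x)) (ae_hit (fin₂ x))
  have hmean : ∫⁻ ω, ∑' n, avoid A₁ n ω ∂m = ∑ x, unifInit d N x * meanHit μ A₁ x := by
    rw [walk_eq_sum_init hμ hm, lintegral_finsetSum_measure]
    simp_rw [lintegral_smul_measure]
    rfl
  have hterm : ∀ x, unifInit d N x * meanHit μ A₁ x ≠ ∞ := fun x =>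
    ENNReal.mul_ne_top (ENNReal.inv_ne_top.2 hNd) (fin₁ x)
  have hfin : ∫⁻ ω, ∑' n, avoid A₁ n ω ∂m ≠ ∞ := by
    rw [hmean]
    exact ENNReal.sum_ne_top.2 fun x _ => hterm x
  have hP : (∫ ω, hitT A₁ ω ∂(m.prod ν₀)) * Fintype.card (Torus d N) =
      ∑ x, (meanHit μ A₁ x).toReal := by
    rw [integral_hitT hν₀ hfin (ae_hit hfin), hmean, ENNReal.toReal_sum fun x _ => hterm x, hcard,
      Finset.sum_mul]
    refine Finset.sum_congr rfl fun x _ => ?_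
    have : (N : ℝ) ^ d ≠ 0 := pow_ne_zero _ (by exact_mod_cast NeZero.ne N)
    rw [ENNReal.toReal_mul, unifInit, ENNReal.toReal_inv, ENNReal.toReal_pow, ENNReal.toReal_natCast]
    field_simp
  simp_rw [hx, hg]
  have hmul : ∀ x y, srwStep x y * meanHit μ A₁ y ≠ ∞ := fun x y =>
    ENNReal.mul_ne_top (srwStep_ne_top hd0 x y) (fin₁ y)
  obtain ⟨h1, h2⟩ := energy_bounds (p := fun x y : Torus d N => (srwStep x y).toReal)
    (fun x y => by rw [srwStep_comm]) (sum_toReal_srwStep hd0 hμ)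
    (fun _ _ => ENNReal.toReal_nonneg) h12 hproper
    (h := fun x => (meanHit μ A₁ x).toReal) (g := fun x => (μ x (enterBefore A₁ A₂)).toReal)
    (fun x hx => by rw [meanHit_of_mem hμ hx, ENNReal.toReal_zero])
    (fun _ => ENNReal.toReal_nonneg)
    (fun x hx => by
      rw [meanHit_of_notMem hμ hx, ENNReal.toReal_add ENNReal.one_ne_top
        (ENNReal.sum_ne_top.2 fun y _ => hmul x y), ENNReal.toReal_sum fun y _ => hmul x y]
      simp_rw [ENNReal.toReal_mul, ENNReal.toReal_one])
    (fun x hx => by rw [measure_enterBefore_of_mem hμ hx, ENNReal.toReal_one])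
    (fun x hx => by
      rw [measure_enterBefore_of_notMem hμ (fun h => hx (h12 h)) hx, ENNReal.toReal_zero])
    (fun x => ENNReal.toReal_le_of_le_ofReal zero_le_one (by simpa using prob_le_one))
    (fun _ => ENNReal.toReal_nonneg)
    (fun x hx => by
      rw [measure_enterBefore hμ hx.2 hx.1, ENNReal.toReal_sum fun y _ =>
        ENNReal.mul_ne_top (srwStep_ne_top hd0 x y) (measure_ne_top _ _)]
      simp_rw [ENNReal.toReal_mul])
    hP (dirichlet_eq _)
  refine ⟨h1 _ fun x hx => le_csSup ?_ ⟨x, hx, rfl⟩, ?_⟩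
  · exact (Set.toFinite _).bddAbove
  · rwa [hcard] at h2

end Frag
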